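/- Let σ ⊆ ℝ be a nonempty compact set, X a complex Banach space, T a bounded operator on X, and C₀ > 0 a constant with ‖p(T)‖ ≤ C₀·(sup_{t∈σ}|p(t)| + var_σ(p)) for every polynomial p with complex coefficients, and suppose that no BV(σ) extension of the polynomial calculus of T exists. Let Y be a complex Banach space that contains a complemented closed subspace isomorphic (as a Banach space) to X; that is, Y = X₁ ⊕ Z for closed subspaces X₁, Z of Y with X₁ isomorphic to X. Set ω = 1 + max σ and σ' = σ ∪ {ω}. Then there exist a bounded operator T' on Y (namely, the operator acting as a conjugate of T on X₁ and as ω times the identity on Z) and a constant C₁ > 0 such that ‖p(T')‖ ≤ C₁·(sup_{t∈σ'}|p(t)| + var_{σ'}(p)) for every polynomial p with complex coefficients, yet no BV(σ') extension of the polynomial calculus of T' exists. -/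

import Mathlib

open MeasureTheory Filter Topology

/-- The `BV(σ)` norm-type quantity `sup_{t ∈ σ} |f(t)| + var_σ(f)`. -/
noncomputable def bvNorm (σ : Set ℝ) (f : ℝ → ℂ) : ℝ :=
  sSup ((fun t => ‖f t‖) '' σ) + (eVariationOn f σ).toReal

/-- A `BV(σ)` extension of the polynomial calculus of a bounded operator `T` on a complex
Banach space `X`: a pair `(Ψ, C')` with `C' > 0`, `Ψ` additive and multiplicative on functions
of bounded variation on `σ`, `‖Ψ(f)‖ ≤ C'·(sup_{t∈σ}|f(t)| + var_σ(f))` for such `f`, and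
`Ψ(p) = p(T)` for every polynomial `p`. -/
def HasBVExtension {X : Type*} [NormedAddCommGroup X] [NormedSpace ℂ X]
    (σ : Set ℝ) (T : X →L[ℂ] X) : Prop :=
  ∃ (C' : ℝ) (_ : 0 < C') (Ψ : (ℝ → ℂ) → X →L[ℂ] X),
    (∀ f g : ℝ → ℂ, BoundedVariationOn f σ → BoundedVariationOn g σ →
      Ψ (f + g) = Ψ f + Ψ g ∧ Ψ (f * g) = (Ψ f).comp (Ψ g)) ∧
    (∀ f : ℝ → ℂ, BoundedVariationOn f σ → ‖Ψ f‖ ≤ C' * bvNorm σ f) ∧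
    (∀ p : Polynomial ℂ, Ψ (fun t : ℝ => p.eval (t : ℂ)) = Polynomial.aeval T p)

/-! A point `ω ∉ σ` is not an eigenvalue of `T`: there are polynomials `p` with `p(ω) = 1` whose
`BV(σ)` norm is as small as we please, and `T x = ω x` gives `‖x‖ ≤ ‖p(T)‖ ‖x‖`. So the
`ω`-eigenspace of `T' = T ⊕ ω` is exactly the complement `Z`. A `BV` calculus `Ψ` of `T'` commutes
with `T'`, hence preserves `Z`, and `Ψ` sends functions supported at `ω` to operators with range in
`Z`. Therefore `f ↦ Ψ(f · 1_{t ≠ ω})`, compressed to the summand `X`, is a calculus of `T`.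
-/

section Variation

variable {α E : Type*} [LinearOrder α] [TopologicalSpace α] [OrderClosedTopology α]
  {s : Set α} {a : α}

theorem eVariationOn_insert_le_of_forall_le [PseudoEMetricSpace E] {f : α → E} {M : ENNReal}
    (hs : IsCompact s) (ha : ∀ x ∈ s, x ≤ a) (hM : ∀ x ∈ s, edist (f x) (f a) ≤ M) :
    eVariationOn f (insert a s) ≤ eVariationOn f s + M := by
  rcases s.eq_empty_or_nonempty with rfl | hne
  · simp
  obtain ⟨b, hb⟩ := hs.exists_isGreatest hne
  rw [← Set.union_singleton, eVariationOn.union' f hb isLeast_singleton (ha b hb.1),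
    eVariationOn.subsingleton f Set.subsingleton_singleton, add_zero]
  gcongr
  exact hM b hb.1

theorem eVariationOn_insert_le_of_forall_ge [PseudoEMetricSpace E] {f : α → E} {M : ENNReal}
    (hs : IsCompact s) (ha : ∀ x ∈ s, a ≤ x) (hM : ∀ x ∈ s, edist (f x) (f a) ≤ M) :
    eVariationOn f (insert a s) ≤ eVariationOn f s + M := by
  rcases s.eq_empty_or_nonempty with rfl | hne
  · simp
  obtain ⟨b, hb⟩ := hs.exists_isLeast hne
  rw [← Set.singleton_union, eVariationOn.union' f isGreatest_singleton hb (ha b hb.1),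
    eVariationOn.subsingleton f Set.subsingleton_singleton, zero_add, add_comm, edist_comm]
  gcongr
  exact hM b hb.1

theorem eVariationOn_insert_le [PseudoEMetricSpace E] {f : α → E} {M : ENNReal}
    (hs : IsCompact s) (hM : ∀ x ∈ s, edist (f x) (f a) ≤ M) :
    eVariationOn f (insert a s) ≤ eVariationOn f s + 2 * M := by
  have hsplit : insert a s = insert a (s ∩ Set.Iic a) ∪ insert a (s ∩ Set.Ici a) := by
    rw [← Set.insert_union_distrib, ← Set.inter_union_distrib_left, Set.Iic_union_Ici,
      Set.inter_univ]
  have hgreatest : IsGreatest (insert a (s ∩ Set.Iic a)) a :=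
    ⟨Set.mem_insert a _, by simp [upperBounds]⟩
  have hleast : IsLeast (insert a (s ∩ Set.Ici a)) a :=
    ⟨Set.mem_insert a _, by simp [lowerBounds]⟩
  calc eVariationOn f (insert a s)
      = eVariationOn f (insert a (s ∩ Set.Iic a)) + eVariationOn f (insert a (s ∩ Set.Ici a)) := by
        rw [hsplit, eVariationOn.union f hgreatest hleast]
    _ ≤ (eVariationOn f (s ∩ Set.Iic a) + M) + (eVariationOn f (s ∩ Set.Ici a) + M) := by
        gcongr
        · exact eVariationOn_insert_le_of_forall_le (hs.inter_right isClosed_Iic)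
            (fun x hx => hx.2) fun x hx => hM x hx.1
        · exact eVariationOn_insert_le_of_forall_ge (hs.inter_right isClosed_Ici)
            (fun x hx => hx.2) fun x hx => hM x hx.1
    _ = eVariationOn f (s ∩ Set.Iic a) + eVariationOn f (s ∩ Set.Ici a) + 2 * M := by ring
    _ ≤ eVariationOn f s + 2 * M := by
        gcongr
        refine (eVariationOn.add_le_union f fun x hx y hy => hx.2.trans hy.2).trans ?_
        rw [← Set.inter_union_distrib_left, Set.Iic_union_Ici, Set.inter_univ]

theorem boundedVariationOn_insert [PseudoMetricSpace E] {f : α → E} (hs : IsCompact s)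
    (hf : BoundedVariationOn f s) : BoundedVariationOn f (insert a s) := by
  rcases s.eq_empty_or_nonempty with rfl | ⟨b, hb⟩
  · exact BoundedVariationOn.of_subsingleton (by simp)
  have hM : ∀ x ∈ s, edist (f x) (f a) ≤ eVariationOn f s + edist (f b) (f a) := fun x hx =>
    (edist_triangle _ (f b) _).trans (by gcongr; exact eVariationOn.edist_le f hx hb)
  rw [BoundedVariationOn] at hf ⊢
  exact ne_top_of_le_ne_top (by finiteness) (eVariationOn_insert_le hs hM)

end Variation

theorem boundedVariationOn_of_contDiff {E : Type*} [NormedAddCommGroup E] [NormedSpace ℝ E]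
    {f : ℝ → E} (hf : ContDiff ℝ 1 f) {s : Set ℝ} (hs : Bornology.IsBounded s) :
    BoundedVariationOn f s := by
  obtain ⟨a, b, hsab⟩ : ∃ a b, s ⊆ Set.Icc a b :=
    ⟨sInf s, sSup s, hs.subset_Icc_sInf_sSup⟩
  obtain ⟨K, hK⟩ := (hf.locallyLipschitz.locallyLipschitzOn
    (s := Set.Icc a b)).exists_lipschitzOnWith_of_compact isCompact_Icc
  exact (hK.comp_boundedVariationOn (Set.mapsTo_id _) (BoundedVariationOn.id_Icc a b)).mono hsab

theorem boundedVariationOn_polynomial {s : Set ℝ} (hs : Bornology.IsBounded s)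
    (p : Polynomial ℂ) : BoundedVariationOn (fun t : ℝ => p.eval (t : ℂ)) s := by
  have hp : ContDiff ℂ 1 fun z : ℂ => p.eval z := by
    simpa only [Polynomial.coe_aeval_eq_eval] using p.contDiff_aeval (R := ℂ) (𝕜 := ℂ) 1
  exact boundedVariationOn_of_contDiff ((hp.restrict_scalars ℝ).comp Complex.ofRealCLM.contDiff) hs

theorem lipschitzOnWith_pow_closedBall {𝕜 : Type*} [RCLike 𝕜] (r : NNReal) (n : ℕ) :
    LipschitzOnWith (n * r ^ (n - 1)) (fun z : 𝕜 => z ^ n) (Metric.closedBall 0 r) := by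
  refine (convex_closedBall (0 : 𝕜) (r : ℝ)).lipschitzOnWith_of_nnnorm_hasDerivWithin_le
    (fun z _ => (hasDerivAt_pow n z).hasDerivWithinAt) fun z hz => ?_
  have hzr : ‖z‖₊ ≤ r := by exact_mod_cast mem_closedBall_zero_iff.1 hz
  rw [nnnorm_mul, nnnorm_pow, RCLike.nnnorm_natCast]
  gcongr

section BVNorm

variable {σ : Set ℝ} {f : ℝ → ℂ} {ω : ℝ}

theorem sSup_norm_image_nonneg (σ : Set ℝ) (f : ℝ → ℂ) : 0 ≤ sSup ((fun t => ‖f t‖) '' σ) :=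
  Real.sSup_nonneg (Set.forall_mem_image.2 fun t _ => norm_nonneg (f t))

theorem bvNorm_nonneg (σ : Set ℝ) (f : ℝ → ℂ) : 0 ≤ bvNorm σ f :=
  add_nonneg (sSup_norm_image_nonneg σ f) ENNReal.toReal_nonneg

theorem bddAbove_norm_image_of_boundedVariationOn (hf : BoundedVariationOn f σ) :
    BddAbove ((fun t => ‖f t‖) '' σ) := by
  rcases σ.eq_empty_or_nonempty with rfl | ⟨b, hb⟩
  · simp
  refine ⟨(eVariationOn f σ).toReal + ‖f b‖, ?_⟩
  rintro _ ⟨t, ht, rfl⟩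
  calc ‖f t‖ ≤ ‖f t - f b‖ + ‖f b‖ := norm_le_norm_sub_add _ _
    _ ≤ (eVariationOn f σ).toReal + ‖f b‖ := by
      gcongr
      exact dist_eq_norm (f t) (f b) ▸ hf.dist_le ht hb

theorem norm_le_sSup_norm_image (hf : BoundedVariationOn f σ) {t : ℝ} (ht : t ∈ σ) :
    ‖f t‖ ≤ sSup ((fun t => ‖f t‖) '' σ) :=
  le_csSup (bddAbove_norm_image_of_boundedVariationOn hf) ⟨t, ht, rfl⟩

theorem norm_le_bvNorm (hf : BoundedVariationOn f σ) {t : ℝ} (ht : t ∈ σ) :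
    ‖f t‖ ≤ bvNorm σ f :=
  (norm_le_sSup_norm_image hf ht).trans (le_add_of_nonneg_right ENNReal.toReal_nonneg)

theorem bvNorm_le {M V : ℝ} (hM₀ : 0 ≤ M) (hV₀ : 0 ≤ V) (hM : ∀ t ∈ σ, ‖f t‖ ≤ M)
    (hV : eVariationOn f σ ≤ ENNReal.ofReal V) : bvNorm σ f ≤ M + V :=
  add_le_add (Real.sSup_le (Set.forall_mem_image.2 hM) hM₀)
    (ENNReal.toReal_le_of_le_ofReal hV₀ hV)

theorem bvNorm_mono {τ : Set ℝ} (h : σ ⊆ τ) (hf : BoundedVariationOn f τ) :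
    bvNorm σ f ≤ bvNorm τ f :=
  bvNorm_le (sSup_norm_image_nonneg τ f) ENNReal.toReal_nonneg
    (fun _ ht => norm_le_sSup_norm_image hf (h ht))
    ((ENNReal.ofReal_toReal hf).symm ▸ eVariationOn.mono f h)

theorem bvNorm_pow_le {r : NNReal} (hf : BoundedVariationOn f σ) (hr : ∀ t ∈ σ, ‖f t‖ ≤ r)
    (n : ℕ) :
    bvNorm σ (f ^ n) ≤ r ^ n + n * r ^ (n - 1) * (eVariationOn f σ).toReal := by
  refine bvNorm_le (by positivity) (by positivity) (fun t ht => ?_) ?_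
  · rw [Pi.pow_apply, norm_pow]
    gcongr
    exact hr t ht
  · have hmaps : Set.MapsTo f σ (Metric.closedBall 0 r) := fun t ht => by simpa using hr t ht
    calc eVariationOn (f ^ n) σ
        ≤ ↑(n * r ^ (n - 1) : NNReal) * eVariationOn f σ :=
          (lipschitzOnWith_pow_closedBall r n).comp_eVariationOn_le hmaps
      _ = ENNReal.ofReal (n * r ^ (n - 1) * (eVariationOn f σ).toReal) := by
          rw [ENNReal.ofReal_mul (by positivity), ENNReal.ofReal_toReal hf]
          congr 1
          exact_mod_cast (ENNReal.ofReal_coe_nnreal (p := n * r ^ (n - 1))).symm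

theorem tendsto_bvNorm_pow {r : NNReal} (hf : BoundedVariationOn f σ) (hr : ∀ t ∈ σ, ‖f t‖ ≤ r)
    (hr1 : r < 1) : Tendsto (fun n : ℕ => bvNorm σ (f ^ n)) atTop (𝓝 0) := by
  have hr1' : (r : ℝ) < 1 := hr1
  have hpow : Tendsto (fun n : ℕ => (r : ℝ) ^ n) atTop (𝓝 0) :=
    tendsto_pow_atTop_nhds_zero_of_lt_one r.2 hr1'
  have hmul : Tendsto (fun n : ℕ => (n : ℝ) * (r : ℝ) ^ (n - 1)) atTop (𝓝 0) := by
    rw [← tendsto_add_atTop_iff_nat 1]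
    simpa [add_mul] using (tendsto_self_mul_const_pow_of_lt_one r.2 hr1').add hpow
  refine squeeze_zero (fun n => bvNorm_nonneg σ _) (bvNorm_pow_le hf hr) ?_
  simpa using hpow.add (hmul.mul_const (eVariationOn f σ).toReal)

theorem boundedVariationOn_indicator_compl_singleton (hσ : IsCompact σ) (hω : ω ∉ σ)
    (hf : BoundedVariationOn f σ) :
    BoundedVariationOn (({ω}ᶜ : Set ℝ).indicator f) (insert ω σ) := by
  refine boundedVariationOn_insert hσ ?_
  rwa [BoundedVariationOn,
    eVariationOn.congr (Set.eqOn_indicator.mono (Set.subset_compl_singleton_iff.2 hω))]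

theorem boundedVariationOn_indicator_singleton (hσ : IsCompact σ) (hω : ω ∉ σ) (f : ℝ → ℂ) :
    BoundedVariationOn (({ω} : Set ℝ).indicator f) (insert ω σ) := by
  have hzero : Set.EqOn (({ω} : Set ℝ).indicator f) 0 σ :=
    Set.eqOn_indicator'.mono (Set.subset_compl_singleton_iff.2 hω)
  refine boundedVariationOn_insert hσ ?_
  rw [BoundedVariationOn, eVariationOn.congr hzero, eVariationOn.constant_on]
  · exact ENNReal.zero_ne_top
  · exact Set.subsingleton_singleton.anti (Set.image_subset_iff.2 fun _ _ => rfl)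

theorem bvNorm_indicator_compl_singleton_le (hσ : IsCompact σ) (hω : ω ∉ σ)
    (hf : BoundedVariationOn f σ) :
    bvNorm (insert ω σ) (({ω}ᶜ : Set ℝ).indicator f) ≤ 3 * bvNorm σ f := by
  set g := ({ω}ᶜ : Set ℝ).indicator f with hg
  set M := sSup ((fun t => ‖f t‖) '' σ)
  have hgω : g ω = 0 := by simp [hg]
  have hgf : Set.EqOn g f σ :=
    Set.eqOn_indicator.mono (Set.subset_compl_singleton_iff.2 hω)
  have hfM : ∀ t ∈ σ, ‖f t‖ ≤ M := fun t ht => norm_le_sSup_norm_image hf ht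
  have hM₀ : 0 ≤ M := sSup_norm_image_nonneg σ f
  have hV₀ : 0 ≤ (eVariationOn f σ).toReal := ENNReal.toReal_nonneg
  have hsup : ∀ t ∈ insert ω σ, ‖g t‖ ≤ M := by
    rintro t (rfl | ht)
    · simpa [hgω] using hM₀
    · simpa [hgf ht] using hfM t ht
  have hvar : eVariationOn g (insert ω σ) ≤
      ENNReal.ofReal ((eVariationOn f σ).toReal + 2 * M) := by
    have hjump : ∀ t ∈ σ, edist (g t) (g ω) ≤ ENNReal.ofReal M := fun t ht => by
      rw [hgω, edist_dist, dist_zero_right]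
      exact ENNReal.ofReal_le_ofReal (hsup t (Set.mem_insert_of_mem ω ht))
    rw [ENNReal.ofReal_add hV₀ (by positivity), ENNReal.ofReal_mul zero_le_two,
      ENNReal.ofReal_toReal hf, ENNReal.ofReal_ofNat, ← eVariationOn.congr hgf]
    exact eVariationOn_insert_le hσ hjump
  calc bvNorm (insert ω σ) g ≤ M + ((eVariationOn f σ).toReal + 2 * M) :=
        bvNorm_le hM₀ (by positivity) hsup hvar
    _ ≤ 3 * (M + (eVariationOn f σ).toReal) := by linarith

end BVNorm

theorem opNorm_comp_comp_le {𝕜 E F G H : Type*} [NontriviallyNormedField 𝕜]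
    [SeminormedAddCommGroup E] [NormedSpace 𝕜 E] [SeminormedAddCommGroup F] [NormedSpace 𝕜 F]
    [SeminormedAddCommGroup G] [NormedSpace 𝕜 G] [SeminormedAddCommGroup H] [NormedSpace 𝕜 H]
    (A : G →L[𝕜] H) (B : F →L[𝕜] G) (D : E →L[𝕜] F) :
    ‖A ∘L B ∘L D‖ ≤ ‖A‖ * (‖B‖ * ‖D‖) :=
  (A.opNorm_comp_le (B ∘L D)).trans (by gcongr; exact B.opNorm_comp_le D)

section BlockDiagonal

variable {𝕜 E F : Type*} [CommRing 𝕜]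
  [AddCommGroup E] [TopologicalSpace E] [IsTopologicalAddGroup E] [Module 𝕜 E]
  [ContinuousConstSMul 𝕜 E]
  [AddCommGroup F] [TopologicalSpace F] [IsTopologicalAddGroup F] [Module 𝕜 F]
  [ContinuousConstSMul 𝕜 F]

/-- If `J : E → F` has the left inverse `R`, so that `F = J(E) ⊕ ker R`, the pair `(A, c)` is sent
to the operator on `F` that acts as `A` on the summand `E` and as the scalar `c` on `ker R`. As this
is an algebra homomorphism, polynomials act on such operators blockwise. -/
def blockDiagonal (J : E →L[𝕜] F) (R : F →L[𝕜] E) (hRJ : ∀ x, R (J x) = x) :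
    (E →L[𝕜] E) × 𝕜 →ₐ[𝕜] (F →L[𝕜] F) :=
  AlgHom.ofLinearMap
    { toFun := fun A => J ∘L A.1 ∘L R + A.2 • (ContinuousLinearMap.id 𝕜 F - J ∘L R)
      map_add' := fun A B => by ext y; simp [add_smul]; abel
      map_smul' := fun c A => by ext y; simp [mul_smul] }
    (by ext y; simp)
    (fun A B => by ext y; simp [hRJ, mul_smul])

variable {J : E →L[𝕜] F} {R : F →L[𝕜] E} (hRJ : ∀ x, R (J x) = x) (A : E →L[𝕜] E) (c : 𝕜)

theorem blockDiagonal_eq :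
    blockDiagonal J R hRJ (A, c) = J ∘L A ∘L R + c • (ContinuousLinearMap.id 𝕜 F - J ∘L R) :=
  rfl

theorem blockDiagonal_apply_of_apply_eq_zero {y : F} (hy : R y = 0) :
    blockDiagonal J R hRJ (A, c) y = c • y := by
  simp [blockDiagonal_eq, hy]

theorem blockDiagonal_apply_section (x : E) :
    blockDiagonal J R hRJ (A, c) (J x) = J (A x) := by
  simp [blockDiagonal_eq, hRJ]

theorem retraction_blockDiagonal_apply (y : F) :
    R (blockDiagonal J R hRJ (A, c) y) = A (R y) := by
  simp [blockDiagonal_eq, hRJ]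

theorem aeval_blockDiagonal (p : Polynomial 𝕜) :
    Polynomial.aeval (blockDiagonal J R hRJ (A, c)) p =
      blockDiagonal J R hRJ (Polynomial.aeval A p, p.eval c) := by
  rw [Polynomial.aeval_algHom_apply, Polynomial.aeval_prod_apply, Polynomial.coe_aeval_eq_eval]

theorem aeval_apply_of_apply_eq_smul {x : E} (hx : A x = c • x) (p : Polynomial 𝕜) :
    Polynomial.aeval A p x = p.eval c • x := by
  let toEnd : (E →L[𝕜] E) →ₐ[𝕜] Module.End 𝕜 E :=
    { ContinuousLinearMap.toLinearMapRingHom with commutes' := fun _ => rfl }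
  have hend : Polynomial.aeval (toEnd A) p x = p.eval c • x :=
    Module.End.aeval_apply_of_mem_apply_eq_smul hx
  rwa [Polynomial.aeval_algHom_apply] at hend

end BlockDiagonal

/-- `T` is an `AC(σ)` operator: its polynomial calculus is bounded for the `BV(σ)` norm. For compact
`σ` it then extends to the closure `AC(σ)` of the polynomials. -/
def IsACOperator {X : Type*} [NormedAddCommGroup X] [NormedSpace ℂ X]
    (σ : Set ℝ) (T : X →L[ℂ] X) : Prop :=
  ∃ C : ℝ, 0 < C ∧ ∀ p : Polynomial ℂ,
    ‖Polynomial.aeval T p‖ ≤ C * bvNorm σ (fun t : ℝ => p.eval (t : ℂ))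

/-- `Ψ` is a `BV(σ)` functional calculus of `T` with bound `C`. The symbol `Ψ` is a total function
whose values off `BV(σ)` are unconstrained, as in `HasBVExtension`. -/
structure IsBVCalculus {X : Type*} [NormedAddCommGroup X] [NormedSpace ℂ X]
    (σ : Set ℝ) (T : X →L[ℂ] X) (C : ℝ) (Ψ : (ℝ → ℂ) → X →L[ℂ] X) : Prop where
  protected map_add : ∀ {f g : ℝ → ℂ}, BoundedVariationOn f σ → BoundedVariationOn g σ →
    Ψ (f + g) = Ψ f + Ψ g
  protected map_mul : ∀ {f g : ℝ → ℂ}, BoundedVariationOn f σ → BoundedVariationOn g σ →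
    Ψ (f * g) = Ψ f ∘L Ψ g
  norm_le : ∀ {f : ℝ → ℂ}, BoundedVariationOn f σ → ‖Ψ f‖ ≤ C * bvNorm σ f
  map_polynomial : ∀ p : Polynomial ℂ, Ψ (fun t : ℝ => p.eval (t : ℂ)) = Polynomial.aeval T p

section Calculus

variable {X Y : Type*} [NormedAddCommGroup X] [NormedSpace ℂ X]
  [NormedAddCommGroup Y] [NormedSpace ℂ Y] {σ : Set ℝ} {ω : ℝ} {T : X →L[ℂ] X}

theorem HasBVExtension.exists_isBVCalculus (h : HasBVExtension σ T) :
    ∃ C Ψ, 0 < C ∧ IsBVCalculus σ T C Ψ := by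
  obtain ⟨C, hC, Ψ, hhom, hnorm, hpoly⟩ := h
  exact ⟨C, Ψ, hC, fun hf hg => (hhom _ _ hf hg).1, fun hf hg => (hhom _ _ hf hg).2, hnorm _,
    hpoly⟩

theorem IsBVCalculus.hasBVExtension {C : ℝ} {Ψ : (ℝ → ℂ) → X →L[ℂ] X}
    (hΨ : IsBVCalculus σ T C Ψ) : HasBVExtension σ T := by
  refine ⟨max C 1, by positivity, Ψ, fun f g hf hg => ⟨hΨ.map_add hf hg, hΨ.map_mul hf hg⟩,
    fun f hf => (hΨ.norm_le hf).trans ?_, hΨ.map_polynomial⟩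
  exact mul_le_mul_of_nonneg_right (le_max_left C 1) (bvNorm_nonneg σ f)

theorem exists_polynomial_eval_eq_one_norm_le_lt_one (hσ : IsCompact σ) (hω : ω ∉ σ) :
    ∃ (q : Polynomial ℂ) (r : NNReal),
      q.eval (ω : ℂ) = 1 ∧ r < 1 ∧ ∀ t ∈ σ, ‖q.eval (t : ℂ)‖ ≤ r := by
  obtain ⟨D, hD, hσD⟩ := hσ.isBounded.subset_ball_lt 0 ω
  let q : Polynomial ℂ :=
    1 - (Polynomial.C (D : ℂ)⁻¹ * (Polynomial.X - Polynomial.C (ω : ℂ))) ^ 2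
  have hq : ∀ t : ℝ, q.eval (t : ℂ) = ((1 - (D⁻¹ * (t - ω)) ^ 2 : ℝ) : ℂ) := fun t => by simp [q]
  have hlt : ∀ t ∈ σ, ‖q.eval (t : ℂ)‖ < 1 := fun t ht => by
    have hne : D⁻¹ * (t - ω) ≠ 0 :=
      mul_ne_zero (inv_ne_zero hD.ne') (sub_ne_zero.2 fun h => hω (h ▸ ht))
    have hsq : (D⁻¹ * (t - ω)) ^ 2 < 1 := by
      have htD : |t - ω| < D := hσD ht
      rw [sq_lt_one_iff_abs_lt_one, abs_mul, abs_of_pos (inv_pos.2 hD), inv_mul_lt_one₀ hD]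
      exact htD
    rw [hq, Complex.norm_real, Real.norm_eq_abs, abs_lt]
    constructor <;> linarith [pow_pos (abs_pos.2 hne) 2, sq_abs (D⁻¹ * (t - ω))]
  have hcont : ContinuousOn (fun t : ℝ => -‖q.eval (t : ℂ)‖) σ := by fun_prop
  obtain ⟨r, hr1, hr⟩ := hσ.exists_forall_le' hcont fun t ht => neg_lt_neg (hlt t ht)
  refine ⟨q, (-r).toNNReal, by simp [q], by simpa using neg_lt.1 hr1, fun t ht => ?_⟩
  exact (le_neg.1 (hr t ht)).trans (Real.le_coe_toNNReal _)

theorem IsACOperator.eq_zero_of_apply_eq_smul (hT : IsACOperator σ T) (hσ : IsCompact σ)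
    (hω : ω ∉ σ) {x : X} (hx : T x = (ω : ℂ) • x) : x = 0 := by
  obtain ⟨C, -, hC⟩ := hT
  obtain ⟨q, r, hqω, hr1, hqr⟩ := exists_polynomial_eval_eq_one_norm_le_lt_one hσ hω
  have hlim : Tendsto (fun n : ℕ => C * bvNorm σ ((fun t : ℝ => q.eval (t : ℂ)) ^ n) * ‖x‖)
      atTop (𝓝 0) := by
    simpa using ((tendsto_bvNorm_pow (boundedVariationOn_polynomial hσ.isBounded q)
      hqr hr1).const_mul C).mul_const ‖x‖
  refine norm_le_zero_iff.1 (ge_of_tendsto' hlim fun n => ?_)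
  calc ‖x‖ = ‖Polynomial.aeval T (q ^ n) x‖ := by
        rw [aeval_apply_of_apply_eq_smul T (ω : ℂ) hx, Polynomial.eval_pow, hqω, one_pow, one_smul]
    _ ≤ ‖Polynomial.aeval T (q ^ n)‖ * ‖x‖ := ContinuousLinearMap.le_opNorm _ _
    _ ≤ C * bvNorm σ ((fun t : ℝ => q.eval (t : ℂ)) ^ n) * ‖x‖ := by
        gcongr
        simpa only [Polynomial.eval_pow, Pi.pow_def] using hC (q ^ n)

theorem isACOperator_blockDiagonal (hT : IsACOperator σ T) (hσ : Bornology.IsBounded σ)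
    {J : X →L[ℂ] Y} {R : Y →L[ℂ] X} (hRJ : ∀ x, R (J x) = x) (ω : ℝ) :
    IsACOperator (insert ω σ) (blockDiagonal J R hRJ (T, (ω : ℂ))) := by
  obtain ⟨C, hC₀, hC⟩ := hT
  set Q : Y →L[ℂ] Y := ContinuousLinearMap.id ℂ Y - J ∘L R
  refine ⟨‖J‖ * C * ‖R‖ + ‖Q‖ + 1, by positivity, fun p => ?_⟩
  have hbv := boundedVariationOn_polynomial (hσ.insert ω) p
  set B := bvNorm (insert ω σ) (fun t : ℝ => p.eval (t : ℂ))
  have hpT : ‖Polynomial.aeval T p‖ ≤ C * B :=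
    (hC p).trans (by gcongr; exact bvNorm_mono (Set.subset_insert ω σ) hbv)
  have hpω : ‖p.eval (ω : ℂ)‖ ≤ B := norm_le_bvNorm hbv (Set.mem_insert ω σ)
  have hB₀ : 0 ≤ B := bvNorm_nonneg _ _
  calc ‖Polynomial.aeval (blockDiagonal J R hRJ (T, (ω : ℂ))) p‖
      = ‖J ∘L Polynomial.aeval T p ∘L R + p.eval (ω : ℂ) • Q‖ := by
        rw [aeval_blockDiagonal, blockDiagonal_eq]
    _ ≤ ‖J‖ * (‖Polynomial.aeval T p‖ * ‖R‖) + ‖p.eval (ω : ℂ)‖ * ‖Q‖ := by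
        exact norm_add_le_of_le (opNorm_comp_comp_le _ _ _) (norm_smul _ _).le
    _ ≤ ‖J‖ * (C * B * ‖R‖) + B * ‖Q‖ := by gcongr
    _ ≤ (‖J‖ * C * ‖R‖ + ‖Q‖ + 1) * B := by linarith

namespace IsBVCalculus

variable {C : ℝ} {Ψ : (ℝ → ℂ) → X →L[ℂ] X} {f : ℝ → ℂ}

theorem map_ofReal (hΨ : IsBVCalculus σ T C Ψ) : Ψ Complex.ofReal = T := by
  simpa using hΨ.map_polynomial Polynomial.X

theorem apply_comm (hΨ : IsBVCalculus σ T C Ψ) (hσ : Bornology.IsBounded σ)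
    (hf : BoundedVariationOn f σ) (x : X) : T (Ψ f x) = Ψ f (T x) := by
  have hid : BoundedVariationOn Complex.ofReal σ := by
    simpa using boundedVariationOn_polynomial hσ Polynomial.X
  have hcomm : T ∘L Ψ f = Ψ f ∘L T := by
    rw [← hΨ.map_ofReal, ← hΨ.map_mul hid hf, mul_comm, hΨ.map_mul hf hid]
  exact DFunLike.congr_fun hcomm x

theorem apply_eq_smul_of_ofReal_mul_eq (hΨ : IsBVCalculus σ T C Ψ) (hσ : Bornology.IsBounded σ)
    (hf : BoundedVariationOn f σ) {c : ℂ} (hc : ∀ t : ℝ, t * f t = c * f t) (x : X) :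
    T (Ψ f x) = c • Ψ f x := by
  have hid : BoundedVariationOn Complex.ofReal σ := by
    simpa using boundedVariationOn_polynomial hσ Polynomial.X
  have hconst := boundedVariationOn_polynomial hσ (Polynomial.C c)
  have hmul : Complex.ofReal * f = (fun t : ℝ => (Polynomial.C c).eval (t : ℂ)) * f := by
    funext t
    simpa using hc t
  have hT : T ∘L Ψ f = Polynomial.aeval T (Polynomial.C c) ∘L Ψ f := by
    rw [← hΨ.map_polynomial, ← hΨ.map_mul hconst hf, ← hmul, hΨ.map_mul hid hf, hΨ.map_ofReal]
  simpa [Algebra.algebraMap_eq_smul_one] using DFunLike.congr_fun hT x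

section Compression

variable {J : X →L[ℂ] Y} {R : Y →L[ℂ] X} {hRJ : ∀ x, R (J x) = x} {Ψ : (ℝ → ℂ) → Y →L[ℂ] Y}

theorem retraction_apply_eq_zero_of_ofReal_mul_eq
    (hΨ : IsBVCalculus σ (blockDiagonal J R hRJ (T, (ω : ℂ))) C Ψ) (hσ : Bornology.IsBounded σ)
    (hT : ∀ x, T x = (ω : ℂ) • x → x = 0) (hf : BoundedVariationOn f σ)
    (hfω : ∀ t : ℝ, t * f t = ω * f t) (y : Y) : R (Ψ f y) = 0 := by
  apply hT
  rw [← retraction_blockDiagonal_apply hRJ T (ω : ℂ),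
    hΨ.apply_eq_smul_of_ofReal_mul_eq hσ hf hfω, map_smul]

theorem retraction_apply_eq (hΨ : IsBVCalculus σ (blockDiagonal J R hRJ (T, (ω : ℂ))) C Ψ)
    (hσ : Bornology.IsBounded σ) (hT : ∀ x, T x = (ω : ℂ) • x → x = 0)
    (hf : BoundedVariationOn f σ) (y : Y) : R (Ψ f y) = R (Ψ f (J (R y))) := by
  have hker : R (y - J (R y)) = 0 := by rw [map_sub, hRJ, sub_self]
  have hpres : R (Ψ f (y - J (R y))) = 0 := by
    apply hT
    rw [← retraction_blockDiagonal_apply hRJ T (ω : ℂ), hΨ.apply_comm hσ hf,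
      blockDiagonal_apply_of_apply_eq_zero hRJ T (ω : ℂ) hker, map_smul, map_smul]
  rwa [map_sub, map_sub, sub_eq_zero] at hpres

theorem compression_polynomial
    (hΨ : IsBVCalculus (insert ω σ) (blockDiagonal J R hRJ (T, (ω : ℂ))) C Ψ)
    (hσ : IsCompact σ) (hω : ω ∉ σ) (hT : ∀ x, T x = (ω : ℂ) • x → x = 0) (p : Polynomial ℂ) :
    R ∘L Ψ (({ω}ᶜ : Set ℝ).indicator fun t : ℝ => p.eval (t : ℂ)) ∘L J = Polynomial.aeval T p := by
  set P : ℝ → ℂ := fun t => p.eval (t : ℂ)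
  have hP := boundedVariationOn_indicator_compl_singleton hσ hω
    (boundedVariationOn_polynomial hσ.isBounded p)
  have hPω := boundedVariationOn_indicator_singleton hσ hω P
  have hsum : Ψ (({ω}ᶜ : Set ℝ).indicator P) + Ψ (({ω} : Set ℝ).indicator P) =
      blockDiagonal J R hRJ (Polynomial.aeval T p, p.eval (ω : ℂ)) := by
    rw [← hΨ.map_add hP hPω, Set.indicator_compl_add_self, hΨ.map_polynomial,
      aeval_blockDiagonal]
  have hsupp : ∀ t : ℝ,
      t * ({ω} : Set ℝ).indicator P t = ω * ({ω} : Set ℝ).indicator P t := fun t => by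
    by_cases ht : t = ω <;> simp [ht]
  ext x
  have hx := congrArg R (DFunLike.congr_fun hsum (J x))
  rwa [add_apply, map_add, blockDiagonal_apply_section, hRJ,
    hΨ.retraction_apply_eq_zero_of_ofReal_mul_eq (hσ.isBounded.insert ω) hT hPω hsupp,
    add_zero] at hx

theorem compression
    (hΨ : IsBVCalculus (insert ω σ) (blockDiagonal J R hRJ (T, (ω : ℂ))) C Ψ) (hC : 0 ≤ C)
    (hσ : IsCompact σ) (hω : ω ∉ σ) (hT : ∀ x, T x = (ω : ℂ) • x → x = 0) :
    IsBVCalculus σ T (‖R‖ * (C * 3) * ‖J‖)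
      (fun f => R ∘L Ψ (({ω}ᶜ : Set ℝ).indicator f) ∘L J) where
  map_add {f g} hf hg := by
    have hf' := boundedVariationOn_indicator_compl_singleton hσ hω hf
    have hg' := boundedVariationOn_indicator_compl_singleton hσ hω hg
    ext x
    simp [Set.indicator_add', hΨ.map_add hf' hg']
  map_mul {f g} hf hg := by
    have hf' := boundedVariationOn_indicator_compl_singleton hσ hω hf
    have hg' := boundedVariationOn_indicator_compl_singleton hσ hω hg
    have hfg : ({ω}ᶜ : Set ℝ).indicator (f * g) =
        ({ω}ᶜ : Set ℝ).indicator f * ({ω}ᶜ : Set ℝ).indicator g := Set.indicator_mul _ f g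
    ext x
    simpa [hfg, hΨ.map_mul hf' hg'] using hΨ.retraction_apply_eq (hσ.isBounded.insert ω) hT hf' _
  norm_le {f} hf := by
    have hf' := boundedVariationOn_indicator_compl_singleton hσ hω hf
    set g := ({ω}ᶜ : Set ℝ).indicator f
    calc ‖R ∘L Ψ g ∘L J‖ ≤ ‖R‖ * (‖Ψ g‖ * ‖J‖) := opNorm_comp_comp_le _ _ _
      _ ≤ ‖R‖ * (C * (3 * bvNorm σ f) * ‖J‖) := by
          gcongr
          refine (hΨ.norm_le hf').trans ?_
          gcongr
          exact bvNorm_indicator_compl_singleton_le hσ hω hf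
      _ = ‖R‖ * (C * 3) * ‖J‖ * bvNorm σ f := by ring
  map_polynomial := hΨ.compression_polynomial hσ hω hT

end Compression

end IsBVCalculus

theorem hasBVExtension_of_blockDiagonal {J : X →L[ℂ] Y} {R : Y →L[ℂ] X}
    {hRJ : ∀ x, R (J x) = x} (hσ : IsCompact σ) (hω : ω ∉ σ)
    (hT : ∀ x, T x = (ω : ℂ) • x → x = 0)
    (h : HasBVExtension (insert ω σ) (blockDiagonal J R hRJ (T, (ω : ℂ)))) :
    HasBVExtension σ T := by
  obtain ⟨C, Ψ, hC, hΨ⟩ := h.exists_isBVCalculus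
  exact (hΨ.compression hC.le hσ hω hT).hasBVExtension

theorem stmt6_general (hσ : IsCompact σ) (hT : IsACOperator σ T) (hnoext : ¬ HasBVExtension σ T)
    {X₁ Z : Submodule ℂ Y} (hcompl : X₁.IsTopCompl Z) (e : X ≃L[ℂ] X₁) (hω : ω ∉ σ) :
    ∃ T' : Y →L[ℂ] Y,
      (∀ x : X, T' (e x) = e (T x)) ∧
      (∀ z ∈ Z, T' z = (ω : ℂ) • z) ∧
      IsACOperator (insert ω σ) T' ∧
      ¬ HasBVExtension (insert ω σ) T' := by
  let J : X →L[ℂ] Y := X₁.subtypeL ∘L e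
  let R : Y →L[ℂ] X := e.symm ∘L X₁.projectionOntoL Z hcompl
  have hRJ : ∀ x, R (J x) = x := fun x => by simp [R, J]
  have hRZ : ∀ z ∈ Z, R z = 0 := fun z hz => by
    simpa [R, Submodule.projectionOntoL_apply_eq_zero_iff] using hz
  refine ⟨blockDiagonal J R hRJ (T, (ω : ℂ)), blockDiagonal_apply_section hRJ T _,
    fun z hz => blockDiagonal_apply_of_apply_eq_zero hRJ T _ (hRZ z hz),
    isACOperator_blockDiagonal hT hσ.isBounded hRJ ω, fun h => hnoext ?_⟩
  exact hasBVExtension_of_blockDiagonal hσ hω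
    (fun _ hx => hT.eq_zero_of_apply_eq_smul hσ hω hx) h

end Calculus

/-- Suppose `T` is a bounded operator on the complex Banach space `X` with a
polynomially bounded `AC(σ)`-type calculus (bound `C₀`) on a nonempty compact `σ ⊆ ℝ`, but with
no `BV(σ)` extension of its polynomial calculus.  If the Banach space `Y` contains a
complemented closed subspace `X₁` isomorphic to `X`, say `Y = X₁ ⊕ Z`, then with
`ω = 1 + max σ` and `σ' = σ ∪ {ω}` there are a bounded operator `T'` on `Y` (namely the one
acting as a conjugate of `T` on `X₁` and as `ω` times the identity on `Z`) and a constant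
`C₁ > 0` such that `‖p(T')‖ ≤ C₁·(sup_{t∈σ'}|p(t)| + var_{σ'}(p))` for every polynomial `p`,
yet no `BV(σ')` extension of the polynomial calculus of `T'` exists. -/
theorem stmt6 {X Y : Type*}
    [NormedAddCommGroup X] [NormedSpace ℂ X] [CompleteSpace X]
    [NormedAddCommGroup Y] [NormedSpace ℂ Y] [CompleteSpace Y]
    (σ : Set ℝ) (hσ : IsCompact σ) (hσne : σ.Nonempty)
    (T : X →L[ℂ] X) (C₀ : ℝ) (hC₀ : 0 < C₀)
    (hbound : ∀ p : Polynomial ℂ,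
      ‖(Polynomial.aeval T p : X →L[ℂ] X)‖ ≤ C₀ * bvNorm σ (fun t : ℝ => p.eval (t : ℂ)))
    (hnoext : ¬ HasBVExtension σ T)
    (X₁ Z : Submodule ℂ Y) (hX₁ : IsClosed (X₁ : Set Y)) (hZ : IsClosed (Z : Set Y))
    (hcompl : IsCompl X₁ Z) (e : X ≃L[ℂ] ↥X₁)
    (ω : ℝ) (hω : ω = 1 + sSup σ) (σ' : Set ℝ) (hσ' : σ' = σ ∪ {ω}) :
    ∃ T' : Y →L[ℂ] Y,
      (∀ x : X, T' ↑(e x) = ↑(e (T x))) ∧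
      (∀ z : Y, z ∈ Z → T' z = (ω : ℂ) • z) ∧
      ∃ C₁ : ℝ, 0 < C₁ ∧
        (∀ p : Polynomial ℂ,
          ‖(Polynomial.aeval T' p : Y →L[ℂ] Y)‖ ≤
            C₁ * bvNorm σ' (fun t : ℝ => p.eval (t : ℂ))) ∧
        ¬ HasBVExtension σ' T' := by
  have hωσ : ω ∉ σ := fun h => by linarith [hσ.isGreatest_sSup hσne |>.2 h]
  obtain ⟨T', hX, hZ', ⟨C₁, hC₁, hbound'⟩, hnoext'⟩ := stmt6_general hσ ⟨C₀, hC₀, hbound⟩ hnoext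
    (Submodule.IsCompl.isTopCompl_of_isClosed hcompl hX₁ hZ) e hωσ
  rw [hσ', Set.union_singleton]
  exact ⟨T', hX, hZ', C₁, hC₁, hbound', hnoext'⟩
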